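/- Let x be a primitive element of the lattice U^{⊕3} with (x,x) = 2k for an integer k. Then there exists an isometry g of U^{⊕3} (a ℤ-linear automorphism of ℤ⁶ preserving the form) such that g(x) = (1, k, 0, 0, 0, 0), i.e. g(x) = e + k·f where (e,f) is the standard basis of the first hyperbolic summand. -/

import Mathlib

/-- The hyperbolic form of `U^{⊕3}`, as a bilinear form on `ℤ⁶`. -/
def hypForm3 (x y : Fin 6 → ℤ) : ℤ :=
  x 0 * y 1 + x 1 * y 0 + x 2 * y 3 + x 3 * y 2 + x 4 * y 5 + x 5 * y 4

/-- An element of `ℤ^m` is primitive if the gcd of its coordinates is `1`. -/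
def IsPrimitive {m : ℕ} (x : Fin m → ℤ) : Prop :=
  Finset.univ.gcd x = 1

/-!
Let `e₁, f₁, e₂, f₂` be the isotropic bases of the two planes in `U ⊕ U ⊕ q`, over a principal ideal
domain. Within the orbit of `x`, choose a vector whose `e₁`-coordinate, the pivot, is minimal for
divisibility. `SL₂` acting on the span of `e₁, e₂` replaces the pivot by its gcd with the
`e₂`-coordinate, so the pivot divides the `e₂`- and `f₂`-coordinates. A transvection clears the
`e₂`-coordinate, after which transvections of the second plane add any value `(v, x)` to the
`f₂`-coordinate without changing the pivot. Hence the pivot divides every `(x, y)`, and it is a unit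
when some `(x, y) = 1`. Using the unit, a transvection makes the `e₂`-coordinate `1`; after swapping
the planes, one more transvection kills everything outside the first plane.
-/

open QuadraticMap

section Orbits

variable {R M M' P : Type*} [CommRing R] [AddCommGroup M] [AddCommGroup M'] [AddCommGroup P]
  [Module R M] [Module R M'] [Module R P]

theorem polar_isometryEquiv_apply {Q : QuadraticMap R M P} {Q' : QuadraticMap R M' P}
    (g : Q.IsometryEquiv Q') (x y : M) : polar Q' (g x) (g y) = polar Q x y := by
  simp only [polar, ← map_add, IsometryEquiv.map_app]

/-- The relation of lying in the same orbit of the isometry group of `Q`. -/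
def SameOrbit (Q : QuadraticMap R M P) (x y : M) : Prop :=
  ∃ g : Q.IsometryEquiv Q, g x = y

namespace SameOrbit

variable {Q : QuadraticMap R M P} {x y z : M}

theorem apply (g : Q.IsometryEquiv Q) (x : M) : SameOrbit Q x (g x) :=
  ⟨g, rfl⟩

theorem refl (Q : QuadraticMap R M P) (x : M) : SameOrbit Q x x :=
  ⟨QuadraticMap.IsometryEquiv.refl Q, rfl⟩

theorem trans (hxy : SameOrbit Q x y) (hyz : SameOrbit Q y z) : SameOrbit Q x z := by
  obtain ⟨g, rfl⟩ := hxy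
  obtain ⟨h, rfl⟩ := hyz
  exact ⟨g.trans h, rfl⟩

theorem map_eq (h : SameOrbit Q x y) : Q y = Q x := by
  obtain ⟨g, rfl⟩ := h
  exact g.map_app x

end SameOrbit

end Orbits

section HyperbolicSum

variable {R M : Type*} [CommRing R] [AddCommGroup M] [Module R M]

variable (R) in
/-- The quadratic form `(a, b) ↦ ab` of the hyperbolic plane `U`. Its polar form has Gram matrix
`[[0,1],[1,0]]`. -/
def hyperbolicPlane : QuadraticForm R (R × R) :=
  linMulLin (LinearMap.fst R R R) (LinearMap.snd R R R)

@[simp]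
theorem hyperbolicPlane_apply (x : R × R) : hyperbolicPlane R x = x.1 * x.2 := rfl

@[simp]
theorem polar_hyperbolicPlane (x y : R × R) :
    polar (hyperbolicPlane R) x y = x.1 * y.2 + x.2 * y.1 := by
  simp only [polar, hyperbolicPlane_apply, Prod.fst_add, Prod.snd_add]
  ring

/-- The orthogonal sum `U ⊕ q` of the hyperbolic plane with a quadratic form `q`. -/
abbrev hyperbolicSum (q : QuadraticForm R M) : QuadraticForm R ((R × R) × M) :=
  (hyperbolicPlane R).prod q

/-- The isometry of `U ⊕ q` that interchanges the two isotropic basis vectors of `U`. -/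
def hyperbolicSwap (q : QuadraticForm R M) :
    (hyperbolicSum q).IsometryEquiv (hyperbolicSum q) where
  toLinearEquiv := (LinearEquiv.prodComm R R R).prodCongr (LinearEquiv.refl R M)
  map_app' x := by simp [mul_comm]

/-- The Eichler transvection of `U ⊕ q` along a vector `v` orthogonal to `U`: it fixes the second
isotropic basis vector `f` and sends `n ⊥ U` to `n + (v, n) f`. -/
def eichlerTransvection (q : QuadraticForm R M) (v : M) :
    (hyperbolicSum q).IsometryEquiv (hyperbolicSum q) where
  toFun x := ((x.1.1, x.1.2 + polar q v x.2 - q v * x.1.1), x.2 - x.1.1 • v)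
  invFun x := ((x.1.1, x.1.2 - polar q v x.2 - q v * x.1.1), x.2 + x.1.1 • v)
  map_add' x y := by
    ext
    · simp
    · simp only [Prod.fst_add, Prod.snd_add, polar_add_right, Prod.mk_add_mk]
      ring
    · simp only [Prod.fst_add, Prod.snd_add]
      module
  map_smul' r x := by
    ext
    · simp
    · simp only [Prod.smul_fst, Prod.smul_snd, smul_eq_mul, polar_smul_right, RingHom.id_apply,
        Prod.smul_mk]
      ring
    · simp only [Prod.smul_fst, Prod.smul_snd, RingHom.id_apply, smul_eq_mul]
      module
  left_inv x := by
    ext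
    · simp
    · simp only [polar_sub_right, polar_smul_right, polar_self, smul_eq_mul, nsmul_eq_mul,
        Nat.cast_ofNat]
      ring
    · simp
  right_inv x := by
    ext
    · simp
    · simp only [polar_add_right, polar_smul_right, polar_self, smul_eq_mul, nsmul_eq_mul,
        Nat.cast_ofNat]
      ring
    · simp
  map_app' x := by
    have hsub : q (x.2 - x.1.1 • v) = q x.2 + x.1.1 * x.1.1 * q v - x.1.1 * polar q v x.2 := by
      rw [sub_eq_add_neg, QuadraticMap.map_add q, QuadraticMap.map_neg, QuadraticMap.map_smul,
        polar_neg_right, polar_smul_right, polar_comm q x.2 v]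
      simp only [smul_eq_mul]
      ring
    simp only [prod_apply, hyperbolicPlane_apply, hsub]
    ring

@[simp]
theorem eichlerTransvection_apply (q : QuadraticForm R M) (v : M) (x : (R × R) × M) :
    eichlerTransvection q v x =
      ((x.1.1, x.1.2 + polar q v x.2 - q v * x.1.1), x.2 - x.1.1 • v) := rfl

theorem sameOrbit_of_fst_fst_eq_one (q : QuadraticForm R M) {x : (R × R) × M}
    (hx : x.1.1 = 1) : SameOrbit (hyperbolicSum q) x ((1, hyperbolicSum q x), 0) := by
  refine ⟨eichlerTransvection q x.2, ?_⟩
  ext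
  · simp [hx]
  · simp only [eichlerTransvection_apply, hx, polar_self, nsmul_eq_mul, Nat.cast_ofNat, mul_one,
      prod_apply, hyperbolicPlane_apply, one_mul]
    ring
  · simp [hx]

end HyperbolicSum

section TwoPlanes

variable {R M : Type*} [CommRing R] [AddCommGroup M] [Module R M]

/-- The isometry of `U ⊕ U ⊕ q` that interchanges the two hyperbolic planes. -/
def planeSwap (q : QuadraticForm R M) :
    (hyperbolicSum (hyperbolicSum q)).IsometryEquiv (hyperbolicSum (hyperbolicSum q)) where
  toFun x := (x.2.1, x.1, x.2.2)
  invFun x := (x.2.1, x.1, x.2.2)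
  map_add' _ _ := rfl
  map_smul' _ _ := rfl
  left_inv _ := rfl
  right_inv _ := rfl
  map_app' x := by
    simp only [prod_apply]
    exact add_left_comm _ _ _

@[simp]
theorem planeSwap_apply (q : QuadraticForm R M) (x : (R × R) × (R × R) × M) :
    planeSwap q x = (x.2.1, x.1, x.2.2) := rfl

/-- The isometry of `U ⊕ U ⊕ q` given by the matrix `[[r, s], [-u, t]]` of determinant one on the
span of `e₁, e₂` and by its inverse transpose on the span of `f₁, f₂`, where `eᵢ, fᵢ` is the
isotropic basis of the `i`-th plane. -/
def planeSL2 (q : QuadraticForm R M) (r s t u : R) (hdet : r * t + s * u = 1) :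
    (hyperbolicSum (hyperbolicSum q)).IsometryEquiv (hyperbolicSum (hyperbolicSum q)) where
  toFun x :=
    ((r * x.1.1 + s * x.2.1.1, t * x.1.2 + u * x.2.1.2),
      (t * x.2.1.1 - u * x.1.1, r * x.2.1.2 - s * x.1.2), x.2.2)
  invFun x :=
    ((t * x.1.1 - s * x.2.1.1, r * x.1.2 - u * x.2.1.2),
      (r * x.2.1.1 + u * x.1.1, t * x.2.1.2 + s * x.1.2), x.2.2)
  map_add' x y := by
    ext <;> simp only [Prod.fst_add, Prod.snd_add] <;> ring
  map_smul' c x := by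
    ext <;> simp only [Prod.smul_fst, Prod.smul_snd, smul_eq_mul, RingHom.id_apply] <;> ring
  left_inv x := by
    ext <;> grind
  right_inv x := by
    ext <;> grind
  map_app' x := by
    simp only [prod_apply, hyperbolicPlane_apply]
    linear_combination (x.1.1 * x.1.2 + x.2.1.1 * x.2.1.2) * hdet

@[simp]
theorem planeSL2_apply (q : QuadraticForm R M) (r s t u : R) (hdet : r * t + s * u = 1)
    (x : (R × R) × (R × R) × M) :
    planeSL2 q r s t u hdet x =
      ((r * x.1.1 + s * x.2.1.1, t * x.1.2 + u * x.2.1.2),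
        (t * x.2.1.1 - u * x.1.1, r * x.2.1.2 - s * x.1.2), x.2.2) := rfl

theorem exists_sameOrbit_fst_fst_dvd [IsDomain R] [IsBezout R] (q : QuadraticForm R M)
    (x : (R × R) × (R × R) × M) :
    ∃ y, SameOrbit (hyperbolicSum (hyperbolicSum q)) x y ∧ y.1.1 ∣ x.1.1 ∧ y.1.1 ∣ x.2.1.1 := by
  classical
  let := IsBezout.toGCDDomain R
  obtain ⟨t, u, ht, hu, htu⟩ := extract_gcd x.1.1 x.2.1.1
  obtain ⟨r, s, hdet⟩ := (gcd_isUnit_iff t u).mp htu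
  have hgcd : r * x.1.1 + s * x.2.1.1 = gcd x.1.1 x.2.1.1 := by
    linear_combination r * ht + s * hu + gcd x.1.1 x.2.1.1 * hdet
  refine ⟨_, .apply (planeSL2 q r s t u hdet) x, ?_⟩
  rw [planeSL2_apply, hgcd]
  exact ⟨gcd_dvd_left _ _, gcd_dvd_right _ _⟩

theorem sameOrbit_of_isUnit_fst_fst (q : QuadraticForm R M) {x : (R × R) × (R × R) × M}
    (hx : IsUnit x.1.1) :
    SameOrbit (hyperbolicSum (hyperbolicSum q)) x
      ((1, hyperbolicSum (hyperbolicSum q) x), 0) := by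
  obtain ⟨a, ha⟩ := hx
  let v : (R × R) × M := ((↑a⁻¹ * (x.2.1.1 - 1), 0), 0)
  have hy : SameOrbit (hyperbolicSum (hyperbolicSum q)) x
      (planeSwap q (eichlerTransvection (hyperbolicSum q) v x)) :=
    (SameOrbit.apply (eichlerTransvection _ v) x).trans (.apply (planeSwap q) _)
  rw [← hy.map_eq]
  exact hy.trans (sameOrbit_of_fst_fst_eq_one _ (by simp [v, ← ha]))

/-- A vector of `U ⊕ U ⊕ q` whose first coordinate has no proper divisor among the first
coordinates of the vectors in its orbit. -/
def HasMinimalPivot (q : QuadraticForm R M) (x : (R × R) × (R × R) × M) : Prop :=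
  ∀ y, SameOrbit (hyperbolicSum (hyperbolicSum q)) x y → y.1.1 ∣ x.1.1 → x.1.1 ∣ y.1.1

theorem exists_sameOrbit_hasMinimalPivot [WfDvdMonoid R] (q : QuadraticForm R M)
    (x : (R × R) × (R × R) × M) :
    ∃ y, SameOrbit (hyperbolicSum (hyperbolicSum q)) x y ∧ HasMinimalPivot q y := by
  obtain ⟨y, hxy, hmin⟩ :=
    (InvImage.wf (fun y : (R × R) × (R × R) × M => y.1.1) wellFounded_dvdNotUnit).has_min
      {y | SameOrbit (hyperbolicSum (hyperbolicSum q)) x y} ⟨x, SameOrbit.refl _ x⟩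
  refine ⟨y, hxy, fun z hyz hdvd => ?_⟩
  by_contra hndvd
  exact hmin z (hxy.trans hyz) (dvdNotUnit_of_dvd_of_not_dvd hdvd hndvd)

namespace HasMinimalPivot

variable {q : QuadraticForm R M} {x : (R × R) × (R × R) × M}

theorem map (h : HasMinimalPivot q x)
    (g : (hyperbolicSum (hyperbolicSum q)).IsometryEquiv (hyperbolicSum (hyperbolicSum q)))
    (hg : (g x).1.1 = x.1.1) : HasMinimalPivot q (g x) := by
  intro z hz hdvd
  rw [hg] at hdvd ⊢
  exact h z ((SameOrbit.apply g x).trans hz) hdvd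

variable [IsDomain R] [IsBezout R]

theorem dvd_snd_fst_fst (h : HasMinimalPivot q x) : x.1.1 ∣ x.2.1.1 := by
  obtain ⟨y, hxy, hdvd, hdvd'⟩ := exists_sameOrbit_fst_fst_dvd q x
  exact (h y hxy hdvd).trans hdvd'

theorem dvd_snd_fst_snd (h : HasMinimalPivot q x) : x.1.1 ∣ x.2.1.2 :=
  (h.map (.prod (.refl _) (hyperbolicSwap q)) rfl).dvd_snd_fst_fst

theorem dvd_polar_of_snd_fst_fst_eq_zero (h : HasMinimalPivot q x) (hx : x.2.1.1 = 0)
    (y : (R × R) × (R × R) × M) : x.1.1 ∣ polar (hyperbolicSum (hyperbolicSum q)) x y := by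
  let v : (R × R) × M := (y.1, y.2.2)
  let g := ((planeSwap q).trans (eichlerTransvection _ v)).trans (planeSwap q)
  have hg : g x = (x.1, (0, x.2.1.2 + polar (hyperbolicSum q) v (x.1, x.2.2)), x.2.2) := by
    change planeSwap q (eichlerTransvection _ v (planeSwap q x)) = _
    simp [hx]
  have hv : x.1.1 ∣ polar (hyperbolicSum q) v (x.1, x.2.2) := by
    have hdvd := (h.map g (by rw [hg])).dvd_snd_fst_snd
    rw [hg] at hdvd
    exact (dvd_add_right h.dvd_snd_fst_snd).mp hdvd
  have hsplit : polar (hyperbolicSum (hyperbolicSum q)) x y =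
      x.2.1.2 * y.2.1.1 + polar (hyperbolicSum q) v (x.1, x.2.2) := by
    simp only [polar_prod, polar_hyperbolicPlane, hx, v, polar_comm q y.2.2]
    ring
  rw [hsplit]
  exact dvd_add (h.dvd_snd_fst_snd.mul_right _) hv

theorem dvd_polar (h : HasMinimalPivot q x) (y : (R × R) × (R × R) × M) :
    x.1.1 ∣ polar (hyperbolicSum (hyperbolicSum q)) x y := by
  obtain ⟨c, hc⟩ := h.dvd_snd_fst_fst
  let g := eichlerTransvection (hyperbolicSum q) ((c, 0), 0)
  rw [← polar_isometryEquiv_apply g]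
  exact (h.map g rfl).dvd_polar_of_snd_fst_fst_eq_zero (by simp [g, hc]) (g y)

end HasMinimalPivot

theorem stmt19_general [IsDomain R] [IsPrincipalIdealRing R] (q : QuadraticForm R M)
    {x : (R × R) × (R × R) × M}
    (hx : ∃ y, polar (hyperbolicSum (hyperbolicSum q)) x y = 1) :
    ∃ g : (hyperbolicSum (hyperbolicSum q)).IsometryEquiv (hyperbolicSum (hyperbolicSum q)),
      g x = ((1, hyperbolicSum (hyperbolicSum q) x), 0) := by
  obtain ⟨y, hy⟩ := hx
  obtain ⟨_, ⟨g, rfl⟩, hmin⟩ := exists_sameOrbit_hasMinimalPivot q x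
  have hunit : IsUnit (g x).1.1 := by
    refine isUnit_of_dvd_one ?_
    rw [← hy, ← polar_isometryEquiv_apply g]
    exact hmin.dvd_polar (g y)
  rw [← (SameOrbit.apply g x).map_eq]
  exact (SameOrbit.apply g x).trans (sameOrbit_of_isUnit_fst_fst q hunit)

end TwoPlanes

section Coordinates

/-- The identification of `ℤ⁶` with the underlying module of `U ⊕ U ⊕ U`: consecutive coordinates
are paired. -/
def pairCoordinates : (Fin 6 → ℤ) ≃ₗ[ℤ] (ℤ × ℤ) × (ℤ × ℤ) × (ℤ × ℤ) where
  toFun x := ((x 0, x 1), (x 2, x 3), (x 4, x 5))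
  invFun y := ![y.1.1, y.1.2, y.2.1.1, y.2.1.2, y.2.2.1, y.2.2.2]
  map_add' _ _ := rfl
  map_smul' _ _ := rfl
  left_inv x := by
    ext i
    fin_cases i <;> rfl
  right_inv _ := rfl

@[simp]
theorem pairCoordinates_apply (x : Fin 6 → ℤ) :
    pairCoordinates x = ((x 0, x 1), (x 2, x 3), (x 4, x 5)) := rfl

theorem hypForm3_eq_polar (x y : Fin 6 → ℤ) :
    hypForm3 x y = polar (hyperbolicSum (hyperbolicSum (hyperbolicPlane ℤ)))
      (pairCoordinates x) (pairCoordinates y) := by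
  simp only [hypForm3, pairCoordinates_apply, polar_prod, polar_hyperbolicPlane]
  ring

theorem hypForm3_self (x : Fin 6 → ℤ) :
    hypForm3 x x =
      2 * hyperbolicSum (hyperbolicSum (hyperbolicPlane ℤ)) (pairCoordinates x) := by
  rw [hypForm3_eq_polar, polar_self, two_smul, two_mul]

theorem IsPrimitive.exists_hypForm3_eq_one {x : Fin 6 → ℤ} (hx : IsPrimitive x) :
    ∃ y, hypForm3 x y = 1 := by
  obtain ⟨c, hc⟩ := Finset.univ.gcd_eq_sum_mul x
  rw [hx, Fin.sum_univ_six] at hc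
  exact ⟨![c 1, c 0, c 3, c 2, c 5, c 4], by simp [hypForm3, hc]⟩

theorem SameOrbit.exists_linearEquiv_hypForm3 {x y : Fin 6 → ℤ}
    (h : SameOrbit (hyperbolicSum (hyperbolicSum (hyperbolicPlane ℤ)))
      (pairCoordinates x) (pairCoordinates y)) :
    ∃ g : (Fin 6 → ℤ) ≃ₗ[ℤ] (Fin 6 → ℤ),
      (∀ a b, hypForm3 (g a) (g b) = hypForm3 a b) ∧ g x = y := by
  obtain ⟨g, hg⟩ := h
  refine ⟨pairCoordinates ≪≫ₗ g.toLinearEquiv ≪≫ₗ pairCoordinates.symm, fun a b => ?_, ?_⟩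
  · simp only [hypForm3_eq_polar, LinearEquiv.trans_apply, LinearEquiv.apply_symm_apply,
      IsometryEquiv.coe_toLinearEquiv, polar_isometryEquiv_apply]
  · simp only [LinearEquiv.trans_apply, IsometryEquiv.coe_toLinearEquiv, hg,
      LinearEquiv.symm_apply_apply]

end Coordinates

/-- Eichler's criterion for `U^{⊕3}`: a primitive `x` with `(x,x) = 2k` is
mapped by some isometry of `U^{⊕3}` to `e + k·f = (1,k,0,0,0,0)`. -/
theorem stmt19 (x : Fin 6 → ℤ) (hprim : IsPrimitive x)
    (k : ℤ) (hx : hypForm3 x x = 2 * k) :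
    ∃ g : (Fin 6 → ℤ) ≃ₗ[ℤ] (Fin 6 → ℤ),
      (∀ a b, hypForm3 (g a) (g b) = hypForm3 a b) ∧
      g x = ![1, k, 0, 0, 0, 0] := by
  obtain rfl : hyperbolicSum (hyperbolicSum (hyperbolicPlane ℤ)) (pairCoordinates x) = k := by
    linarith [hypForm3_self x]
  obtain ⟨y, hy⟩ := hprim.exists_hypForm3_eq_one
  exact SameOrbit.exists_linearEquiv_hypForm3
    (stmt19_general (hyperbolicPlane ℤ) ⟨pairCoordinates y, by rw [← hypForm3_eq_polar, hy]⟩)
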